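/- arXiv:1204.4503 — 2 statements merged into one kernel-verified Lean document; each statement's English description precedes it below -/
import Mathlib

section
/- Let q ≥ 3 be an integer and fix 0 ≤ β < β_c(q) = (q−1)log(q−1)/(q−2). For σ ∈ Σ_n let S(σ) = (S¹(σ),…,S^q(σ)) with S^k(σ) = n^{−1} #{v ∈ {1,…,n} : σ(v) = k} be the proportions vector. Then the variance of S under the Curie–Weiss Potts measure satisfies Var_{μ_n}(S) = O(n^{−1}): there exists a constant C > 0 such that for all n ≥ 1, E_{μ_n} ‖S − E_{μ_n} S‖₂² ≤ C/n. -/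
open Finset

/-- The (unnormalized) Curie–Weiss Potts weight of a configuration. -/
noncomputable def pottsWeight (q n : ℕ) (β : ℝ) (σ : Fin n → Fin q) : ℝ :=
  Real.exp ((β / (n : ℝ)) * ∑ u : Fin n, ∑ v : Fin n, if σ u = σ v then (1 : ℝ) else 0)

/-- The Curie–Weiss Potts probability measure `μ_n` on configurations. -/
noncomputable def pottsMeasure (q n : ℕ) (β : ℝ) (σ : Fin n → Fin q) : ℝ :=
  pottsWeight q n β σ / ∑ τ : Fin n → Fin q, pottsWeight q n β τ

/-- The proportions vector: `S^k(σ) = n⁻¹ #{v : σ(v) = k}`. -/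
noncomputable def propVec (q n : ℕ) (σ : Fin n → Fin q) (k : Fin q) : ℝ :=
  ((Finset.univ.filter fun v : Fin n => σ v = k).card : ℝ) / n

/-- The static critical inverse temperature `β_c(q) = (q−1)log(q−1)/(q−2)`. -/
noncomputable def betaC (q : ℕ) : ℝ :=
  if q = 2 then 1 else ((q : ℝ) - 1) * Real.log ((q : ℝ) - 1) / ((q : ℝ) - 2)

/-! Up to a constant factor, the Potts weight of `σ` is `exp (β n ‖D‖²)`, where
`D = S - (1/q, …, 1/q)`.
Under the uniform measure `n D` is a sum of `n` independent centred colour indicators, so everything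
rests on the Laplace transform of one uniform colour: it is sub-Gaussian,
`q⁻¹ ∑ₖ exp (tₖ) ≤ exp (q⁻¹ ∑ₖ tₖ + ‖t‖² / (4 β_c))`. By convex duality this follows from an entropy
inequality, `log q - H(s) ≥ β_c (‖s‖² - 1/q)` for probability vectors `s`, proved by induction on
`q`: peel off the largest coordinate, apply the optimal quadratic (Pinsker) bound for Bernoulli
laws, and use that `β_c(q) / q = u / (2 sinh u)`, with `u = log (q - 1)`, decreases in `q`.

Averaging the Laplace transform of `n D` against a Gaussian bounds the uniform expectation of
`exp (γ n ‖D‖²)` independently of `n` for every `γ < β_c`. Taking `β < γ`, this leaves room to bound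
the expectation of `n ‖D‖²` under the measure tilted by `exp (β n ‖D‖²)`.
-/

/-! ### The critical constant and the Bernoulli Pinsker inequality -/

section

open Real Set

theorem log_le_sub_inv_div_two {x : ℝ} (hx : 1 ≤ x) : log x ≤ (x - x⁻¹) / 2 := by
  rw [← sinh_log (zero_lt_one.trans_le hx)]
  exact self_le_sinh_iff.2 (log_nonneg hx)

theorem convexOn_sinh : ConvexOn ℝ (Ici 0) sinh := by
  refine MonotoneOn.convexOn_of_deriv (convex_Ici 0) continuous_sinh.continuousOn
    differentiable_sinh.differentiableOn fun x hx y hy hxy ↦ ?_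
  rw [interior_Ici, Set.mem_Ioi] at hx hy
  simpa [cosh_le_cosh, abs_of_pos hx, abs_of_pos hy] using hxy

theorem monotoneOn_sinh_div_self : MonotoneOn (fun x ↦ sinh x / x) (Ioi 0) := by
  intro x hx y hy hxy
  simpa using convexOn_sinh.secant_mono self_mem_Ici (Ioi_subset_Ici_self hx)
    (Ioi_subset_Ici_self hy) (ne_of_gt hx) (ne_of_gt hy) hxy

theorem betaC_pos {q : ℕ} (hq : 2 ≤ q) : 0 < betaC q := by
  unfold betaC
  split_ifs with h
  · exact one_pos
  · have hq3 : (3 : ℝ) ≤ q := by exact_mod_cast (by omega : 3 ≤ q)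
    have hlog : 0 < log (q - 1 : ℝ) := log_pos (by linarith)
    exact div_pos (mul_pos (by linarith) hlog) (by linarith)

theorem betaC_div_self {q : ℕ} (hq : 3 ≤ q) :
    betaC q / q = (2 * (sinh (log (q - 1)) / log (q - 1)))⁻¹ := by
  have hq3 : (3 : ℝ) ≤ q := by exact_mod_cast hq
  have hq2 : (q : ℝ) - 2 ≠ 0 := by linarith
  have hq1 : (q : ℝ) - 1 ≠ 0 := by linarith
  have hfactor : ((q : ℝ) - 1) ^ 2 - 1 = q * (q - 2) := by ring
  rw [betaC, if_neg (by omega), sinh_log (by linarith)]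
  field_simp
  rw [hfactor]
  field_simp

theorem betaC_succ_div_succ_le {q : ℕ} (hq : 2 ≤ q) :
    betaC (q + 1) / (q + 1) ≤ betaC q / q := by
  have hcast : ((q + 1 : ℕ) : ℝ) - 1 = q := by push_cast; ring
  have hlog : 0 < log (q : ℝ) := log_pos (by exact_mod_cast hq)
  have hsucc := betaC_div_self (q := q + 1) (by omega)
  rw [hcast, Nat.cast_add_one] at hsucc
  rw [hsucc]
  obtain rfl | hq3 := hq.eq_or_lt
  · have hsinh : 1 ≤ sinh (log 2) / log 2 :=
      (one_le_div hlog).2 (self_le_sinh_iff.2 hlog.le)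
    simp only [betaC, if_true, one_div]
    exact inv_anti₀ two_pos (by push_cast; linarith)
  · have hq3' : (3 : ℝ) ≤ q := by exact_mod_cast hq3
    have hlog' : 0 < log (q - 1 : ℝ) := log_pos (by linarith)
    have hsinh : 0 < sinh (log (q - 1 : ℝ)) := sinh_pos_iff.2 hlog'
    have hmono := monotoneOn_sinh_div_self hlog' hlog (log_le_log (by linarith) (by linarith))
    rw [betaC_div_self hq3]
    exact inv_anti₀ (mul_pos two_pos (div_pos hsinh hlog'))
      (mul_le_mul_of_nonneg_left hmono zero_le_two)

theorem betaC_succ_mul_one_sub_le {q : ℕ} (hq : 2 ≤ q) {x : ℝ} (hx : 1 ≤ (q + 1) * x) :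
    betaC (q + 1) * (1 - x) ≤ betaC q := by
  have hq0 : (0 : ℝ) < q := by positivity
  have hx' : 1 - x ≤ q / (q + 1) := by
    rw [le_div_iff₀ (by positivity)]
    linarith
  calc betaC (q + 1) * (1 - x) ≤ betaC (q + 1) * (q / (q + 1)) :=
        mul_le_mul_of_nonneg_left hx' (betaC_pos (by omega)).le
    _ = betaC (q + 1) / (q + 1) * q := by ring
    _ ≤ betaC q / q * q := mul_le_mul_of_nonneg_right (betaC_succ_div_succ_le hq) hq0.le
    _ = betaC q := div_mul_cancel₀ _ hq0.ne'

/-- The optimal constant `c` in the quadratic lower bound `c * (x - p) ^ 2` for the relative entropy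
of a Bernoulli(`x`) law with respect to a Bernoulli(`p`) law (Ordentlich–Weinberger). The quotient
is `0 / 0` at `p = 1 / 2`, where its limit is Pinsker's constant `2`. -/
noncomputable def bernoulliPinskerConst (p : ℝ) : ℝ :=
  if p = 1 / 2 then 2 else (log (1 - p) - log p) / (1 - 2 * p)

theorem bernoulliPinskerConst_mul (p : ℝ) :
    bernoulliPinskerConst p * (1 - 2 * p) = log (1 - p) - log p := by
  unfold bernoulliPinskerConst
  split_ifs with hp
  · subst hp; norm_num
  · exact div_mul_cancel₀ _ fun h ↦ hp (by linarith)

theorem two_mul_one_sub_two_mul_le_log_sub_log {x : ℝ} (hx0 : 0 < x) (hx : x ≤ 1 / 2) :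
    2 * (1 - 2 * x) ≤ log (1 - x) - log x := by
  have hodds : 1 + (1 - 2 * x) / x = (1 - x) / x := by field_simp; ring
  have hlog := le_log_one_add_of_nonneg (x := (1 - 2 * x) / x)
    (div_nonneg (by linarith) hx0.le)
  rw [hodds, log_div (by linarith) hx0.ne'] at hlog
  convert! hlog using 1
  field_simp
  ring

theorem log_sub_log_le_sub_inv {x : ℝ} (hx0 : 0 < x) (hx : x ≤ 1 / 2) :
    2 * (log (1 - x) - log x) ≤ (x⁻¹ + (1 - x)⁻¹) * (1 - 2 * x) := by
  have h1x : 0 < 1 - x := by linarith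
  have hlog := log_le_sub_inv_div_two ((one_le_div hx0).2 (by linarith : x ≤ 1 - x))
  rw [log_div h1x.ne' hx0.ne'] at hlog
  have hodds : (x⁻¹ + (1 - x)⁻¹) * (1 - 2 * x) = (1 - x) / x - ((1 - x) / x)⁻¹ := by
    field_simp
    ring
  linarith

theorem hasDerivAt_log_one_sub_sub_log {x : ℝ} (hx0 : x ≠ 0) (hx1 : x ≠ 1) :
    HasDerivAt (fun x ↦ log (1 - x) - log x) (-(x⁻¹ + (1 - x)⁻¹)) x := by
  refine ((((hasDerivAt_id x).const_sub 1).log (sub_ne_zero.2 hx1.symm)).sub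
    (hasDerivAt_log hx0)).congr_deriv ?_
  simp only [id]
  ring

theorem antitoneOn_bernoulliPinskerConst : AntitoneOn bernoulliPinskerConst (Ioc 0 (1 / 2)) := by
  have hderiv : ∀ x ∈ Ioo (0 : ℝ) (1 / 2), HasDerivAt
      (fun x ↦ (log (1 - x) - log x) / (1 - 2 * x))
      ((-(x⁻¹ + (1 - x)⁻¹) * (1 - 2 * x) - (log (1 - x) - log x) * -2) / (1 - 2 * x) ^ 2) x := by
    intro x ⟨hx0, hx⟩
    refine (hasDerivAt_log_one_sub_sub_log hx0.ne' (by linarith)).div ?_ (by linarith)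
    simpa using ((hasDerivAt_id x).const_mul 2).const_sub 1
  have hanti : AntitoneOn (fun x ↦ (log (1 - x) - log x) / (1 - 2 * x)) (Ioo 0 (1 / 2)) := by
    refine antitoneOn_of_hasDerivWithinAt_nonpos (convex_Ioo _ _)
      (fun x hx ↦ (hderiv x hx).continuousAt.continuousWithinAt)
      (fun x hx ↦ (hderiv x (interior_subset hx)).hasDerivWithinAt) fun x hx ↦ ?_
    rw [interior_Ioo] at hx
    have := log_sub_log_le_sub_inv hx.1 hx.2.le
    exact div_nonpos_of_nonpos_of_nonneg (by linarith) (sq_nonneg _)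
  intro x ⟨hx0, hx⟩ y ⟨hy0, hy⟩ hxy
  unfold bernoulliPinskerConst
  split_ifs with hy' hx' hx'
  · rfl
  · rw [le_div_iff₀ (by linarith [hx.lt_of_ne hx'])]
    exact two_mul_one_sub_two_mul_le_log_sub_log hx0 hx
  · linarith [hy.lt_of_ne hy']
  · exact hanti ⟨hx0, hx.lt_of_ne hx'⟩ ⟨hy0, hy.lt_of_ne hy'⟩ hxy

/-- The relative entropy of Bernoulli(`x`) with respect to Bernoulli(`p`), minus its quadratic lower
bound. -/
noncomputable def bernoulliPinskerGap (p x : ℝ) : ℝ :=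
  -(x * log p + (1 - x) * log (1 - p)) - binEntropy x - bernoulliPinskerConst p * (x - p) ^ 2

theorem bernoulliPinskerGap_self (p : ℝ) : bernoulliPinskerGap p p = 0 := by
  rw [bernoulliPinskerGap, binEntropy_eq_negMulLog_add_negMulLog_one_sub, negMulLog, negMulLog]
  ring

theorem bernoulliPinskerGap_one_sub (p x : ℝ) :
    bernoulliPinskerGap p (1 - x) = bernoulliPinskerGap p x := by
  rw [bernoulliPinskerGap, bernoulliPinskerGap, binEntropy_one_sub]
  linear_combination (2 * x - 1) * bernoulliPinskerConst_mul p

theorem continuous_bernoulliPinskerGap (p : ℝ) : Continuous (bernoulliPinskerGap p) := by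
  unfold bernoulliPinskerGap
  fun_prop

theorem hasDerivAt_bernoulliPinskerGap (p : ℝ) {x : ℝ} (hx0 : x ≠ 0) (hx1 : x ≠ 1) :
    HasDerivAt (bernoulliPinskerGap p)
      ((1 - 2 * x) * (bernoulliPinskerConst p - bernoulliPinskerConst x)) x := by
  have hid := hasDerivAt_id x
  refine (((((hid.mul_const (log p)).add ((hid.const_sub 1).mul_const (log (1 - p)))).neg).sub
    (hasDerivAt_binEntropy hx0 hx1)).sub
      (((hid.sub_const p).pow 2).const_mul (bernoulliPinskerConst p))).congr_deriv ?_
  simp only [id]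
  push_cast
  linear_combination bernoulliPinskerConst_mul x - bernoulliPinskerConst_mul p

theorem bernoulliPinskerGap_nonneg_of_le_half {p x : ℝ} (hp0 : 0 < p) (hp : p ≤ 1 / 2)
    (hx0 : 0 ≤ x) (hx : x ≤ 1 / 2) : 0 ≤ bernoulliPinskerGap p x := by
  have hderiv : ∀ y ∈ Ioo (0 : ℝ) (1 / 2), HasDerivAt (bernoulliPinskerGap p)
      ((1 - 2 * y) * (bernoulliPinskerConst p - bernoulliPinskerConst y)) y :=
    fun y hy ↦ hasDerivAt_bernoulliPinskerGap p hy.1.ne' (by linarith [hy.2])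
  have hcont {s} := (continuous_bernoulliPinskerGap p).continuousOn (s := s)
  have hanti : AntitoneOn (bernoulliPinskerGap p) (Icc 0 p) := by
    refine antitoneOn_of_hasDerivWithinAt_nonpos (convex_Icc 0 p) hcont
      (fun y hy ↦ (hderiv y ?_).hasDerivWithinAt) fun y hy ↦ ?_ <;>
      rw [interior_Icc] at hy
    · exact ⟨hy.1, hy.2.trans_le hp⟩
    · have := antitoneOn_bernoulliPinskerConst ⟨hy.1, by linarith [hy.2]⟩ ⟨hp0, hp⟩ hy.2.le
      exact mul_nonpos_of_nonneg_of_nonpos (by linarith [hy.2]) (by linarith)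
  have hmono : MonotoneOn (bernoulliPinskerGap p) (Icc p (1 / 2)) := by
    refine monotoneOn_of_hasDerivWithinAt_nonneg (convex_Icc p (1 / 2)) hcont
      (fun y hy ↦ (hderiv y ?_).hasDerivWithinAt) fun y hy ↦ ?_ <;>
      rw [interior_Icc] at hy
    · exact ⟨hp0.trans hy.1, hy.2⟩
    · have := antitoneOn_bernoulliPinskerConst ⟨hp0, hp⟩ ⟨hp0.trans hy.1, hy.2.le⟩ hy.1.le
      exact mul_nonneg (by linarith [hy.2]) (by linarith)
  rw [← bernoulliPinskerGap_self p]
  rcases le_total x p with hxp | hpx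
  · exact hanti ⟨hx0, hxp⟩ ⟨hp0.le, le_rfl⟩ hxp
  · exact hmono ⟨le_rfl, hp⟩ ⟨hpx, hx⟩ hpx

theorem bernoulliPinskerGap_nonneg {p x : ℝ} (hp0 : 0 < p) (hp : p ≤ 1 / 2) (hx0 : 0 ≤ x)
    (hx1 : x ≤ 1) : 0 ≤ bernoulliPinskerGap p x := by
  rcases le_total x (1 / 2) with hx' | hx'
  · exact bernoulliPinskerGap_nonneg_of_le_half hp0 hp hx0 hx'
  · rw [← bernoulliPinskerGap_one_sub]
    exact bernoulliPinskerGap_nonneg_of_le_half hp0 hp (by linarith) (by linarith)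

theorem bernoulliPinskerConst_inv_succ {m : ℕ} (hm : 1 ≤ m) :
    bernoulliPinskerConst (m + 1 : ℝ)⁻¹ = betaC (m + 1) * ((m + 1) / m) := by
  obtain rfl | hm2 := hm.eq_or_lt
  · norm_num [bernoulliPinskerConst, betaC]
  · have hm2' : (2 : ℝ) ≤ m := by exact_mod_cast hm2
    have hm0 : (m : ℝ) - 1 ≠ 0 := by linarith
    have hcompl : 1 - (m + 1 : ℝ)⁻¹ = m / (m + 1) := by field_simp; ring
    have hodd : 1 - 2 * (m + 1 : ℝ)⁻¹ = (m - 1) / (m + 1) := by field_simp; ring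
    have hconst := bernoulliPinskerConst_mul (m + 1 : ℝ)⁻¹
    rw [hcompl, hodd, log_div (by positivity) (by positivity), log_inv, sub_neg_eq_add,
      sub_add_cancel] at hconst
    have hcast : ((m + 1 : ℕ) : ℝ) - 2 = m - 1 := by push_cast; ring
    rw [betaC, if_neg (by omega), hcast, Nat.cast_add_one, add_sub_cancel_right, ← hconst]
    field_simp

theorem binEntropy_le_log_succ {m : ℕ} (hm : 1 ≤ m) {x : ℝ} (hx0 : 0 ≤ x) (hx1 : x ≤ 1) :
    binEntropy x ≤ log (m + 1) - (1 - x) * log m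
      - betaC (m + 1) * ((m + 1) / m) * (x - (m + 1 : ℝ)⁻¹) ^ 2 := by
  have hm1 : (1 : ℝ) ≤ m := by exact_mod_cast hm
  have hp : (m + 1 : ℝ)⁻¹ ≤ 1 / 2 := by
    rw [one_div]
    exact inv_anti₀ two_pos (by linarith)
  have hcompl : 1 - (m + 1 : ℝ)⁻¹ = m / (m + 1) := by field_simp; ring
  have hgap := bernoulliPinskerGap_nonneg (by positivity) hp hx0 hx1
  rw [bernoulliPinskerGap, bernoulliPinskerConst_inv_succ hm, hcompl,
    log_div (by positivity) (by positivity), log_inv] at hgap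
  linarith

end

/-! ### The entropy inequality and its dual -/

section

open Real

variable {ι : Type*}

theorem exists_eq_sum_mul_of_nonneg {T : Finset ι} (hT : T.Nonempty) {s : ι → ℝ}
    (hs : ∀ i ∈ T, 0 ≤ s i) :
    ∃ t : ι → ℝ, (∀ i ∈ T, 0 ≤ t i) ∧ ∑ i ∈ T, t i = 1 ∧ ∀ i ∈ T, s i = (∑ j ∈ T, s j) * t i := by
  rcases (sum_nonneg hs).eq_or_lt with hsum | hsum
  · refine ⟨fun _ ↦ (#T : ℝ)⁻¹, fun _ _ ↦ by positivity, ?_, fun i hi ↦ ?_⟩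
    · simp [hT.card_ne_zero]
    · rw [← hsum, zero_mul]
      exact (sum_eq_zero_iff_of_nonneg hs).1 hsum.symm i hi
  · exact ⟨fun i ↦ s i / ∑ j ∈ T, s j, fun i hi ↦ div_nonneg (hs i hi) hsum.le,
      by rw [← sum_div, div_self hsum.ne'], fun i _ ↦ (mul_div_cancel₀ _ hsum.ne').symm⟩

theorem sum_negMulLog_mul {T : Finset ι} {t : ι → ℝ} (ht : ∑ i ∈ T, t i = 1) (c : ℝ) :
    ∑ i ∈ T, negMulLog (c * t i) = negMulLog c + c * ∑ i ∈ T, negMulLog (t i) := by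
  simp only [negMulLog_mul, sum_add_distrib, ← sum_mul, ← mul_sum, ht, one_mul]

theorem inv_card_le_sum_sq {T : Finset ι} {t : ι → ℝ} (ht : ∑ i ∈ T, t i = 1) :
    (#T : ℝ)⁻¹ ≤ ∑ i ∈ T, t i ^ 2 := by
  have hT : T.Nonempty := nonempty_of_sum_ne_zero (ht.trans_ne one_ne_zero)
  have hsq := sq_sum_le_card_mul_sum_sq (s := T) (f := t)
  rw [ht, one_pow] at hsq
  exact (inv_le_iff_one_le_mul₀' (by simpa using hT.card_pos)).2 hsq

section Peeling

variable [DecidableEq ι] {T : Finset ι} {s t : ι → ℝ} {a : ι}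

theorem sum_negMulLog_eq_binEntropy_add (ha : a ∈ T) (ht : ∑ i ∈ T.erase a, t i = 1)
    (hst : ∀ i ∈ T.erase a, s i = (1 - s a) * t i) :
    ∑ i ∈ T, negMulLog (s i) =
      binEntropy (s a) + (1 - s a) * ∑ i ∈ T.erase a, negMulLog (t i) := by
  rw [← add_sum_erase T _ ha, sum_congr rfl fun i hi ↦ congrArg negMulLog (hst i hi),
    sum_negMulLog_mul ht, binEntropy_eq_negMulLog_add_negMulLog_one_sub, add_assoc]

theorem sum_sq_sub_inv_card_eq {m : ℕ} (hm : m ≠ 0) (ha : a ∈ T)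
    (hst : ∀ i ∈ T.erase a, s i = (1 - s a) * t i) :
    ∑ i ∈ T, s i ^ 2 - (m + 1 : ℝ)⁻¹ = (m + 1) / m * (s a - (m + 1 : ℝ)⁻¹) ^ 2
      + (1 - s a) ^ 2 * (∑ i ∈ T.erase a, t i ^ 2 - (m : ℝ)⁻¹) := by
  have hsq : ∑ i ∈ T.erase a, s i ^ 2 = (1 - s a) ^ 2 * ∑ i ∈ T.erase a, t i ^ 2 := by
    rw [mul_sum]
    exact sum_congr rfl fun i hi ↦ by rw [hst i hi, mul_pow]
  rw [← add_sum_erase T _ ha, hsq]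
  field_simp
  ring

end Peeling

/-- Peeling off the largest mass `x`, the chain rule splits the entropy into that of Bernoulli(`x`)
and `1 - x` times that of the conditional law of the other points. Since `x ≥ 1 / (m + 1)`, the
factor `1 - x` is compensated by the monotonicity of `betaC m / m`. -/
theorem sum_negMulLog_le_log_card_sub {T : Finset ι} (hT : 2 ≤ #T) {s : ι → ℝ}
    (hs : ∀ i ∈ T, 0 ≤ s i) (hs1 : ∑ i ∈ T, s i = 1) :
    ∑ i ∈ T, negMulLog (s i) ≤ log #T - betaC #T * (∑ i ∈ T, s i ^ 2 - (#T : ℝ)⁻¹) := by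
  classical
  obtain ⟨m, hm⟩ : ∃ m, #T = m := ⟨_, rfl⟩
  rw [hm] at hT ⊢
  induction m, hT using Nat.le_induction generalizing T s with
  | base =>
    obtain ⟨a, b, hab, rfl⟩ := card_eq_two.1 hm
    rw [sum_pair hab] at hs1 ⊢
    have hsb : s b = 1 - s a := by linarith
    have hbin := binEntropy_le_log_succ le_rfl (hs a (by simp)) (by linarith [hs b (by simp)])
    rw [binEntropy_eq_negMulLog_add_negMulLog_one_sub, ← hsb] at hbin
    refine hbin.trans_eq ?_
    rw [sum_pair hab, hsb]
    norm_num
    ring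
  | succ m hm2 ih =>
    obtain ⟨a, ha, hmax⟩ := T.exists_max_image s (card_pos.1 (by omega))
    have hcard : #(T.erase a) = m := by rw [card_erase_of_mem ha, hm, Nat.add_sub_cancel]
    have hrest : ∑ i ∈ T.erase a, s i = 1 - s a := by rw [← hs1, ← add_sum_erase T s ha]; ring
    have hs_erase : ∀ i ∈ T.erase a, 0 ≤ s i := fun i hi ↦ hs i (mem_of_mem_erase hi)
    have hrest0 : 0 ≤ 1 - s a := hrest ▸ sum_nonneg hs_erase
    obtain ⟨t, ht, ht1, hst⟩ :=
      exists_eq_sum_mul_of_nonneg (card_pos.1 (by omega : 0 < #(T.erase a))) hs_erase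
    rw [hrest] at hst
    have hlarge : 1 ≤ (m + 1) * s a := by
      simpa [hs1, hm] using sum_le_card_nsmul T s (s a) hmax
    have hcoef := betaC_succ_mul_one_sub_le hm2 hlarge
    have hV : 0 ≤ ∑ i ∈ T.erase a, t i ^ 2 - (m : ℝ)⁻¹ :=
      sub_nonneg.2 (hcard ▸ inv_card_le_sum_sq ht1)
    have hbin := binEntropy_le_log_succ (by omega : 1 ≤ m) (hs a ha) (sub_nonneg.1 hrest0)
    have hcond := mul_le_mul_of_nonneg_left (ih ht ht1 hcard) hrest0
    have hsquares := mul_le_mul_of_nonneg_right hcoef (mul_nonneg hrest0 hV)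
    rw [sum_negMulLog_eq_binEntropy_add ha ht1 hst, Nat.cast_add_one,
      sum_sq_sub_inv_card_eq (by omega) ha hst]
    linarith

variable [Fintype ι]

theorem sum_mul_le_of_sum_eq_one {s : ι → ℝ} (hs : ∑ i, s i = 1) (t : ι → ℝ) {b : ℝ}
    (hb : 0 < b) :
    ∑ i, s i * t i ≤ (∑ i, t i) / Fintype.card ι
      + b * (∑ i, s i ^ 2 - (Fintype.card ι : ℝ)⁻¹) + (∑ i, t i ^ 2) / (4 * b) := by
  have hι : Nonempty ι := univ_nonempty_iff.1 (nonempty_of_sum_ne_zero (hs.trans_ne one_ne_zero))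
  set c : ℝ := (Fintype.card ι : ℝ)⁻¹ with hc
  have hcard : (Fintype.card ι : ℝ) * c = 1 := mul_inv_cancel₀ (by positivity)
  have hyoung : ∀ i, s i * t i ≤ t i * c + b * (s i - c) ^ 2 + t i ^ 2 / (4 * b) := fun i ↦ by
    have hsq : t i * c + b * (s i - c) ^ 2 + t i ^ 2 / (4 * b) - s i * t i
        = (2 * b * (s i - c) - t i) ^ 2 / (4 * b) := by
      field_simp
      ring
    exact sub_nonneg.1 (hsq ▸ by positivity)
  have hvar : ∑ i, (s i - c) ^ 2 = ∑ i, s i ^ 2 - c := by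
    simp only [sub_sq, sum_add_distrib, sum_sub_distrib, ← sum_mul, ← mul_sum, hs, sum_const,
      card_univ, nsmul_eq_mul]
    linear_combination c * hcard
  calc ∑ i, s i * t i ≤ ∑ i, (t i * c + b * (s i - c) ^ 2 + t i ^ 2 / (4 * b)) :=
        sum_le_sum fun i _ ↦ hyoung i
    _ = _ := by
        rw [sum_add_distrib, sum_add_distrib, ← sum_mul, ← mul_sum, ← sum_div, hvar, hc,
          ← div_eq_mul_inv]

theorem sum_negMulLog_exp_div_sum_exp [Nonempty ι] (t : ι → ℝ) :
    ∑ i, negMulLog (exp (t i) / ∑ j, exp (t j)) =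
      log (∑ j, exp (t j)) - ∑ i, exp (t i) / (∑ j, exp (t j)) * t i := by
  set Z := ∑ j, exp (t j) with hZ
  have hZ0 : 0 < Z := sum_pos (fun _ _ ↦ exp_pos _) univ_nonempty
  have hterm : ∀ i, negMulLog (exp (t i) / Z) = exp (t i) / Z * log Z - exp (t i) / Z * t i :=
    fun i ↦ by
      rw [negMulLog, log_div (exp_ne_zero _) hZ0.ne', log_exp]
      ring
  simp only [hterm, sum_sub_distrib, ← sum_mul, ← sum_div, ← hZ, div_self hZ0.ne', one_mul]

/-- Convex duality: apply the entropy bound to the Gibbs law `s i ∝ exp (t i)`. -/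
theorem sum_exp_le (hι : 2 ≤ Fintype.card ι) (t : ι → ℝ) :
    ∑ i, exp (t i) ≤ Fintype.card ι *
      exp ((∑ i, t i) / Fintype.card ι + (∑ i, t i ^ 2) / (4 * betaC (Fintype.card ι))) := by
  have : Nonempty ι := Fintype.card_pos_iff.1 (by omega)
  have hZ : 0 < ∑ i, exp (t i) := sum_pos (fun _ _ ↦ exp_pos _) univ_nonempty
  have hgibbs : ∑ i, exp (t i) / ∑ j, exp (t j) = 1 := by rw [← sum_div, div_self hZ.ne']
  have hentropy := sum_negMulLog_le_log_card_sub (T := univ) hι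
    (fun i _ ↦ (div_pos (exp_pos (t i)) hZ).le) hgibbs
  rw [sum_negMulLog_exp_div_sum_exp, card_univ] at hentropy
  have hyoung := sum_mul_le_of_sum_eq_one hgibbs t (betaC_pos hι)
  rw [← log_le_log_iff hZ (by positivity), log_mul (by positivity) (exp_ne_zero _), log_exp]
  linarith

end

/-! ### Quadratic exponential moments and tilting -/

section

open Real MeasureTheory Module
open scoped InnerProductSpace

variable {V : Type*} [NormedAddCommGroup V] [InnerProductSpace ℝ V] [FiniteDimensional ℝ V]
  [MeasurableSpace V] [BorelSpace V]

theorem integral_exp_neg_mul_sq_norm_add_inner {b : ℝ} (hb : 0 < b) (w : V) :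
    ∫ v : V, exp (-b * ‖v‖ ^ 2 + ⟪w, v⟫_ℝ) =
      (π / b) ^ (finrank ℝ V / 2 : ℝ) * exp (‖w‖ ^ 2 / (4 * b)) := by
  have hsquare : ∀ v : V, exp (-b * ‖v‖ ^ 2 + ⟪w, v⟫_ℝ) =
      exp (-b * ‖v - (2 * b)⁻¹ • w‖ ^ 2) * exp (‖w‖ ^ 2 / (4 * b)) := fun v ↦ by
    rw [← exp_add, norm_sub_sq_real, norm_smul, mul_pow, norm_eq_abs, sq_abs, inner_smul_right,
      real_inner_comm]
    congr 1
    field_simp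
    ring
  simp only [hsquare]
  rw [integral_mul_const, integral_sub_right_eq_self (fun v : V ↦ exp (-b * ‖v‖ ^ 2)),
    GaussianFourier.integral_rexp_neg_mul_sq_norm hb]

theorem integrable_exp_neg_mul_sq_norm_add_inner {b : ℝ} (hb : 0 < b) (w : V) :
    Integrable fun v : V ↦ exp (-b * ‖v‖ ^ 2 + ⟪w, v⟫_ℝ) :=
  .of_integral_ne_zero <| by
    rw [integral_exp_neg_mul_sq_norm_add_inner hb]
    positivity

section HubbardStratonovich

variable {Ω : Type*} [Fintype Ω] {p : Ω → ℝ} {X : Ω → V} {A a : ℝ}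

/-- Hubbard–Stratonovich: `exp (‖x‖ ^ 2 / (4 * b))` is a Gaussian average of the exponentials
`exp ⟪x, v⟫`. -/
theorem sum_mul_exp_sq_norm_div_mul_le
    (hX : ∀ v, ∑ ω, p ω * exp ⟪X ω, v⟫_ℝ ≤ A * exp (a * ‖v‖ ^ 2)) {b : ℝ} (hb : 0 < b)
    (hab : a < b) :
    (∑ ω, p ω * exp (‖X ω‖ ^ 2 / (4 * b))) * (π / b) ^ (finrank ℝ V / 2 : ℝ) ≤
      A * (π / (b - a)) ^ (finrank ℝ V / 2 : ℝ) := by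
  have hint := fun ω ↦ (integrable_exp_neg_mul_sq_norm_add_inner hb (X ω)).const_mul (p ω)
  have hpointwise : ∀ v, ∑ ω, p ω * exp (-b * ‖v‖ ^ 2 + ⟪X ω, v⟫_ℝ) ≤
      A * exp (-(b - a) * ‖v‖ ^ 2 + ⟪0, v⟫_ℝ) := fun v ↦ by
    have hsplit : exp (-(b - a) * ‖v‖ ^ 2) = exp (-b * ‖v‖ ^ 2) * exp (a * ‖v‖ ^ 2) := by
      rw [← exp_add]
      ring_nf
    simp only [exp_add, mul_left_comm (p _), ← mul_sum, inner_zero_left, exp_zero, mul_one]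
    rw [hsplit, mul_left_comm A]
    exact mul_le_mul_of_nonneg_left (hX v) (exp_pos _).le
  calc _ = ∫ v, ∑ ω, p ω * exp (-b * ‖v‖ ^ 2 + ⟪X ω, v⟫_ℝ) := by
        rw [integral_finsetSum _ fun ω _ ↦ hint ω, sum_mul]
        refine sum_congr rfl fun ω _ ↦ ?_
        rw [integral_const_mul, integral_exp_neg_mul_sq_norm_add_inner hb]
        ring
    _ ≤ ∫ v, A * exp (-(b - a) * ‖v‖ ^ 2 + ⟪0, v⟫_ℝ) :=
        integral_mono (integrable_finsetSum _ fun ω _ ↦ hint ω)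
          ((integrable_exp_neg_mul_sq_norm_add_inner (sub_pos.2 hab) 0).const_mul A) hpointwise
    _ = _ := by
        rw [integral_const_mul, integral_exp_neg_mul_sq_norm_add_inner (sub_pos.2 hab)]
        simp

theorem sum_mul_exp_mul_sq_norm_le
    (hX : ∀ v, ∑ ω, p ω * exp ⟪X ω, v⟫_ℝ ≤ A * exp (a * ‖v‖ ^ 2)) {c : ℝ} (hc : 0 < c)
    (hac : 4 * a * c < 1) :
    ∑ ω, p ω * exp (c * ‖X ω‖ ^ 2) ≤ A * (1 - 4 * a * c) ^ (-(finrank ℝ V / 2) : ℝ) := by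
  obtain ⟨b, hb, rfl⟩ : ∃ b, 0 < b ∧ c = (4 * b)⁻¹ := ⟨(4 * c)⁻¹, by positivity, by field_simp⟩
  have hr : 0 < 1 - 4 * a * (4 * b)⁻¹ := sub_pos.2 hac
  have hba : b - a = b * (1 - 4 * a * (4 * b)⁻¹) := by field_simp
  have hgauss := sum_mul_exp_sq_norm_div_mul_le hX hb (sub_pos.1 (hba ▸ mul_pos hb hr))
  rw [hba, ← div_div, div_eq_mul_inv (π / b), mul_rpow (by positivity) (by positivity),
    inv_rpow hr.le, ← rpow_neg hr.le, mul_comm ((π / b) ^ _), ← mul_assoc] at hgauss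
  simp only [← div_eq_inv_mul]
  exact le_of_mul_le_mul_right hgauss (by positivity)

end HubbardStratonovich

end

section

open Real

variable {Ω : Type*} [Fintype Ω]

theorem sum_mul_sub_mean_sq_le {p : Ω → ℝ} (hp : ∑ ω, p ω = 1) (X : Ω → ℝ) (a : ℝ) :
    ∑ ω, p ω * (X ω - ∑ τ, p τ * X τ) ^ 2 ≤ ∑ ω, p ω * (X ω - a) ^ 2 := by
  set M := ∑ τ, p τ * X τ with hM
  have hsteiner : ∑ ω, p ω * (X ω - a) ^ 2 = ∑ ω, p ω * (X ω - M) ^ 2 + (M - a) ^ 2 := by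
    have hterm : ∀ ω, p ω * (X ω - a) ^ 2 =
        p ω * (X ω - M) ^ 2 + 2 * (M - a) * (p ω * X ω) + p ω * (a ^ 2 - M ^ 2) := fun ω ↦ by ring
    simp only [hterm, sum_add_distrib, ← mul_sum, ← sum_mul]
    rw [← hM, hp]
    ring
  rw [hsteiner]
  exact le_add_of_nonneg_right (sq_nonneg _)

theorem card_mul_sum_exp_mul_mul_le {β : ℝ} (hβ : β ≤ 0) (Y : Ω → ℝ) :
    Fintype.card Ω * ∑ ω, exp (β * Y ω) * Y ω ≤ (∑ ω, exp (β * Y ω)) * ∑ ω, Y ω := by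
  refine Antivary.card_mul_sum_le_sum_mul_sum fun ω τ h ↦ exp_le_exp.2 ?_
  exact mul_le_mul_of_nonpos_left h.le hβ

variable [Nonempty Ω] {Y : Ω → ℝ} {β γ K : ℝ}

theorem sum_exp_mul_mul_le_of_nonneg (hY : ∀ ω, 0 ≤ Y ω) (hβ0 : 0 ≤ β) (hβγ : β < γ)
    (hK : ∑ ω, exp (γ * Y ω) ≤ K * Fintype.card Ω) :
    ∑ ω, exp (β * Y ω) * Y ω ≤ K / (γ - β) * ∑ ω, exp (β * Y ω) := by
  have hK0 : 0 ≤ K := nonneg_of_mul_nonneg_left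
    ((sum_nonneg fun ω _ ↦ (exp_pos (γ * Y ω)).le).trans hK) (by positivity)
  have htilt : ∀ ω, (γ - β) * (exp (β * Y ω) * Y ω) ≤ exp (γ * Y ω) := fun ω ↦ by
    calc (γ - β) * (exp (β * Y ω) * Y ω) = exp (β * Y ω) * ((γ - β) * Y ω) := by ring
      _ ≤ exp (β * Y ω) * exp ((γ - β) * Y ω) := by
          gcongr
          linarith [add_one_le_exp ((γ - β) * Y ω)]
      _ = exp (γ * Y ω) := by rw [← exp_add]; ring_nf
  have hcard : (Fintype.card Ω : ℝ) ≤ ∑ ω, exp (β * Y ω) := by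
    simpa using card_nsmul_le_sum univ (fun ω ↦ exp (β * Y ω)) 1
      fun ω _ ↦ one_le_exp (mul_nonneg hβ0 (hY ω))
  rw [div_mul_eq_mul_div, le_div_iff₀ (sub_pos.2 hβγ), mul_comm, mul_sum]
  calc ∑ ω, (γ - β) * (exp (β * Y ω) * Y ω) ≤ ∑ ω, exp (γ * Y ω) := sum_le_sum fun ω _ ↦ htilt ω
    _ ≤ K * Fintype.card Ω := hK
    _ ≤ K * ∑ ω, exp (β * Y ω) := mul_le_mul_of_nonneg_left hcard hK0

theorem sum_exp_mul_mul_le (hY : ∀ ω, 0 ≤ Y ω) (hγ : 0 < γ) (hβγ : β < γ)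
    (hK : ∑ ω, exp (γ * Y ω) ≤ K * Fintype.card Ω) :
    ∑ ω, exp (β * Y ω) * Y ω ≤ K / (γ - max β 0) * ∑ ω, exp (β * Y ω) := by
  rcases le_total 0 β with hβ | hβ
  · rw [max_eq_left hβ]
    exact sum_exp_mul_mul_le_of_nonneg hY hβ hβγ hK
  · have hcard : (0 : ℝ) < Fintype.card Ω := by positivity
    have hmean : ∑ ω, Y ω ≤ K / γ * Fintype.card Ω := by
      simpa using sum_exp_mul_mul_le_of_nonneg hY le_rfl hγ hK
    rw [max_eq_right hβ, sub_zero]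
    refine le_of_mul_le_mul_left ?_ hcard
    calc Fintype.card Ω * ∑ ω, exp (β * Y ω) * Y ω
        ≤ (∑ ω, exp (β * Y ω)) * ∑ ω, Y ω := card_mul_sum_exp_mul_mul_le hβ Y
      _ ≤ (∑ ω, exp (β * Y ω)) * (K / γ * Fintype.card Ω) := by gcongr
      _ = Fintype.card Ω * (K / γ * ∑ ω, exp (β * Y ω)) := by ring

end

/-! ### The Potts measure -/

section

open Real
open scoped InnerProductSpace

variable {q n : ℕ}

/-- The deviation `S(σ) - (1/q, …, 1/q)` of the proportions vector from the uniform one, as a point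
of Euclidean space. -/
noncomputable def propDeviation (q n : ℕ) (σ : Fin n → Fin q) : EuclideanSpace ℝ (Fin q) :=
  WithLp.toLp 2 fun k ↦ propVec q n σ k - (q : ℝ)⁻¹

theorem norm_sq_propDeviation (σ : Fin n → Fin q) :
    ‖propDeviation q n σ‖ ^ 2 = ∑ k, (propVec q n σ k - (q : ℝ)⁻¹) ^ 2 :=
  EuclideanSpace.real_norm_sq_eq _

theorem sum_comp_eq_mul_sum_propVec (σ : Fin n → Fin q) (f : Fin q → ℝ) :
    ∑ v, f (σ v) = n * ∑ k, propVec q n σ k * f k := by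
  rw [← sum_fiberwise' univ σ f, mul_sum]
  refine sum_congr rfl fun k _ ↦ ?_
  obtain rfl | hn := eq_or_ne n 0
  · simp
  · rw [sum_const, nsmul_eq_mul, propVec]
    field_simp

theorem sum_propVec (hn : n ≠ 0) (σ : Fin n → Fin q) : ∑ k, propVec q n σ k = 1 := by
  have hsum := sum_comp_eq_mul_sum_propVec σ 1
  simp only [Pi.one_apply, mul_one, sum_const, card_univ, Fintype.card_fin, nsmul_eq_mul] at hsum
  exact (mul_eq_left₀ (by exact_mod_cast hn)).1 hsum.symm

theorem sum_sum_ite_eq_mul_sum_sq_propVec (σ : Fin n → Fin q) :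
    ∑ u, ∑ v, (if σ u = σ v then (1 : ℝ) else 0) = n ^ 2 * ∑ k, propVec q n σ k ^ 2 := by
  have hrow : ∀ u, ∑ v, (if σ u = σ v then (1 : ℝ) else 0) = n * propVec q n σ (σ u) := fun u ↦ by
    simpa using sum_comp_eq_mul_sum_propVec σ fun k ↦ if σ u = k then (1 : ℝ) else 0
  simp only [hrow, ← mul_sum, sum_comp_eq_mul_sum_propVec σ (propVec q n σ)]
  simp only [sq, mul_assoc]

theorem sum_sq_propVec (hn : n ≠ 0) (σ : Fin n → Fin q) :
    ∑ k, propVec q n σ k ^ 2 = ‖propDeviation q n σ‖ ^ 2 + (q : ℝ)⁻¹ := by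
  have : Nonempty (Fin q) := ⟨σ ⟨0, Nat.pos_of_ne_zero hn⟩⟩
  have hq : (q : ℝ) * (q : ℝ)⁻¹ = 1 :=
    mul_inv_cancel₀ (by simpa using (Fintype.card_ne_zero (α := Fin q)))
  simp only [norm_sq_propDeviation, sub_sq, sum_add_distrib, sum_sub_distrib, ← sum_mul, ← mul_sum,
    sum_propVec hn, sum_const, card_univ, Fintype.card_fin, nsmul_eq_mul]
  linear_combination -(q : ℝ)⁻¹ * hq

theorem pottsWeight_eq (hn : n ≠ 0) (β : ℝ) (σ : Fin n → Fin q) :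
    pottsWeight q n β σ = exp (n * β / q) * exp (β * (n * ‖propDeviation q n σ‖ ^ 2)) := by
  rw [pottsWeight, sum_sum_ite_eq_mul_sum_sq_propVec, sum_sq_propVec hn, ← exp_add]
  congr 1
  field_simp
  ring

theorem pottsMeasure_eq (hn : n ≠ 0) (β : ℝ) (σ : Fin n → Fin q) :
    pottsMeasure q n β σ = exp (β * (n * ‖propDeviation q n σ‖ ^ 2)) /
      ∑ τ, exp (β * (n * ‖propDeviation q n τ‖ ^ 2)) := by
  simp only [pottsMeasure, pottsWeight_eq hn, ← mul_sum]
  exact mul_div_mul_left _ _ (exp_ne_zero _)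

theorem sum_pottsMeasure [NeZero q] (β : ℝ) : ∑ σ : Fin n → Fin q, pottsMeasure q n β σ = 1 := by
  simp only [pottsMeasure, ← sum_div]
  exact div_self (sum_pos (fun σ _ ↦ exp_pos _) univ_nonempty).ne'

theorem inner_smul_propDeviation (σ : Fin n → Fin q) (y : EuclideanSpace ℝ (Fin q)) :
    ⟪(n : ℝ) • propDeviation q n σ, y⟫_ℝ = ∑ v, y (σ v) - n * ((∑ k, y k) / q) := by
  rw [sum_comp_eq_mul_sum_propVec σ y, ← mul_sub, sum_div, ← sum_sub_distrib, inner_smul_left,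
    PiLp.inner_apply]
  congr 1
  refine sum_congr rfl fun k _ ↦ ?_
  simp only [propDeviation, RCLike.inner_apply, conj_trivial]
  ring

theorem sum_exp_inner_smul_propDeviation_le (hq : 2 ≤ q) (y : EuclideanSpace ℝ (Fin q)) :
    ∑ σ : Fin n → Fin q, exp ⟪(n : ℝ) • propDeviation q n σ, y⟫_ℝ ≤
      q ^ n * exp (n / (4 * betaC q) * ‖y‖ ^ 2) := by
  have hcolor := sum_exp_le (ι := Fin q) (by simpa using hq) y
  rw [Fintype.card_fin, ← EuclideanSpace.real_norm_sq_eq] at hcolor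
  have hprod : ∑ σ : Fin n → Fin q, exp (∑ v, y (σ v)) = (∑ k, exp (y k)) ^ n := by
    simp only [exp_sum, Fintype.sum_pow]
  calc ∑ σ : Fin n → Fin q, exp ⟪(n : ℝ) • propDeviation q n σ, y⟫_ℝ
      = (∑ k, exp (y k)) ^ n / exp (n * ((∑ k, y k) / q)) := by
        simp only [inner_smul_propDeviation, exp_sub, ← sum_div, hprod]
    _ ≤ (q * exp ((∑ k, y k) / q + ‖y‖ ^ 2 / (4 * betaC q))) ^ n / exp (n * ((∑ k, y k) / q)) := by
        gcongr
    _ = q ^ n * exp (n / (4 * betaC q) * ‖y‖ ^ 2) := by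
        rw [mul_pow, ← exp_nat_mul, mul_div_assoc, ← exp_sub]
        ring_nf

theorem sum_exp_mul_sq_norm_propDeviation_le (hq : 2 ≤ q) (hn : n ≠ 0) {γ : ℝ} (hγ0 : 0 < γ)
    (hγ : γ < betaC q) :
    ∑ σ : Fin n → Fin q, exp (γ * (n * ‖propDeviation q n σ‖ ^ 2)) ≤
      (1 - γ / betaC q) ^ (-(q / 2) : ℝ) * Fintype.card (Fin n → Fin q) := by
  have hβc := betaC_pos hq
  have hratio : 4 * (n / (4 * betaC q)) * (γ / n) = γ / betaC q := by field_simp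
  have hexp := sum_mul_exp_mul_sq_norm_le (p := 1)
    (X := fun σ : Fin n → Fin q ↦ (n : ℝ) • propDeviation q n σ)
    (fun y ↦ by simpa using sum_exp_inner_smul_propDeviation_le hq y)
    (c := γ / n) (by positivity) (by rwa [hratio, div_lt_one hβc])
  have hscale : ∀ σ : Fin n → Fin q,
      γ / n * ‖(n : ℝ) • propDeviation q n σ‖ ^ 2 = γ * (n * ‖propDeviation q n σ‖ ^ 2) :=
    fun σ ↦ by
      rw [norm_smul, mul_pow, norm_natCast]
      field_simp
  rw [hratio, mul_comm] at hexp
  simpa [hscale] using hexp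

theorem potts_variance_le_sum_norm_sq [NeZero q] (β : ℝ) :
    ∑ σ : Fin n → Fin q, pottsMeasure q n β σ *
        ∑ k, (propVec q n σ k - ∑ τ, pottsMeasure q n β τ * propVec q n τ k) ^ 2 ≤
      ∑ σ, pottsMeasure q n β σ * ‖propDeviation q n σ‖ ^ 2 := by
  simp only [norm_sq_propDeviation, mul_sum]
  rw [sum_comm, sum_comm (s := univ (α := Fin n → Fin q))]
  exact sum_le_sum fun k _ ↦
    sum_mul_sub_mean_sq_le (sum_pottsMeasure β) (fun σ ↦ propVec q n σ k) (q : ℝ)⁻¹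

theorem sum_pottsMeasure_mul_norm_sq_le (hq : 2 ≤ q) (hn : n ≠ 0) {β γ : ℝ} (hγ0 : 0 < γ)
    (hβγ : β < γ) (hγ : γ < betaC q) :
    ∑ σ, pottsMeasure q n β σ * ‖propDeviation q n σ‖ ^ 2 ≤
      (1 - γ / betaC q) ^ (-(q / 2) : ℝ) / (γ - max β 0) / n := by
  have : NeZero q := ⟨by omega⟩
  have hZ : 0 < ∑ τ : Fin n → Fin q, exp (β * (n * ‖propDeviation q n τ‖ ^ 2)) :=
    sum_pos (fun _ _ ↦ exp_pos _) univ_nonempty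
  have htilt := sum_exp_mul_mul_le
    (fun σ : Fin n → Fin q ↦ (by positivity : 0 ≤ n * ‖propDeviation q n σ‖ ^ 2)) hγ0 hβγ
    (sum_exp_mul_sq_norm_propDeviation_le hq hn hγ0 hγ)
  simp only [pottsMeasure_eq hn, div_mul_eq_mul_div, ← sum_div]
  rw [le_div_iff₀ (by positivity), div_mul_eq_mul_div, div_le_iff₀ hZ, sum_mul]
  refine (sum_congr rfl fun σ _ ↦ ?_).trans_le htilt
  ring

theorem potts_proportions_variance_general (q : ℕ) (hq : 2 ≤ q) (β : ℝ) (hβ : β < betaC q) :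
    ∃ C : ℝ, 0 < C ∧ ∀ n : ℕ, 1 ≤ n →
      ∑ σ : Fin n → Fin q, pottsMeasure q n β σ *
          ∑ k : Fin q,
            (propVec q n σ k - ∑ τ : Fin n → Fin q, pottsMeasure q n β τ * propVec q n τ k) ^ 2
        ≤ C / n := by
  have : NeZero q := ⟨by omega⟩
  obtain ⟨γ, hβγ, hγ⟩ := exists_between (max_lt hβ (betaC_pos hq))
  obtain ⟨hβγ', hγ0⟩ := max_lt_iff.1 hβγ
  refine ⟨(1 - γ / betaC q) ^ (-(q / 2) : ℝ) / (γ - max β 0), ?_, fun n hn ↦ ?_⟩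
  · exact div_pos (rpow_pos_of_pos (sub_pos.2 ((div_lt_one (betaC_pos hq)).2 hγ)) _)
      (sub_pos.2 hβγ)
  · exact (potts_variance_le_sum_norm_sq β).trans
      (sum_pottsMeasure_mul_norm_sq_le hq (by omega) hγ0 hβγ' hγ)

end

/-- **Variance of the proportions vector** (Corollary 3.5). For `q ≥ 3` and
`0 ≤ β < β_c(q)`, the variance `E_{μ_n} ‖S − E_{μ_n} S‖₂²` of the proportions
vector under the Curie–Weiss Potts measure is `O(n⁻¹)`. -/
theorem potts_proportions_variance (q : ℕ) (hq : 3 ≤ q) (β : ℝ)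
    (hβ0 : 0 ≤ β) (hβ : β < betaC q) :
    ∃ C : ℝ, 0 < C ∧ ∀ n : ℕ, 1 ≤ n →
      ∑ σ : Fin n → Fin q, pottsMeasure q n β σ *
          ∑ k : Fin q,
            (propVec q n σ k - ∑ τ : Fin n → Fin q, pottsMeasure q n β τ * propVec q n τ k) ^ 2
        ≤ C / n :=
  potts_proportions_variance_general q (by omega) β hβ
end

section
/- For every integer q ≥ 3, β_c(q)·(1 − 1/q) < β_c(q−1), where β_c(2) = 1 and β_c(q) = (q−1)log(q−1)/(q−2) for q ≥ 3. Equivalently, this follows for q ≥ 4 from the fact that the function f(x) = ((x−1)/(x(x−2))) log(x−1) is strictly decreasing on [3, ∞). -/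
/-!
Substituting `t = log (x - 1)` gives `β_c(x) / x = t / (2 sinh t)`, also at `x = 2`, where
`β_c(2) / 2 = 1 / 2` is the limit as `t → 0`. Since `sinh` is strictly convex on `[0, ∞)`, its
slope `sinh t / t` from the origin is strictly increasing, so `β_c(x) / x` is strictly decreasing
on `[2, ∞)`. Comparing its values at `x - 1` and `x` gives the recursive inequality.
-/

open Real Set

theorem strictMonoOn_dslope_of_strictConvexOn {s : Set ℝ} {f : ℝ → ℝ} {a : ℝ}
    (hf : StrictConvexOn ℝ s f) (ha : a ∈ s) (hfa : DifferentiableAt ℝ f a) :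
    StrictMonoOn (dslope f a) s := by
  intro x hx y hy hxy
  rcases eq_or_ne x a with rfl | hxa
  · rw [dslope_same, dslope_of_ne f hxy.ne']
    exact hf.deriv_lt_slope hx hy hxy hfa
  rcases eq_or_ne y a with rfl | hya
  · rw [dslope_same, dslope_of_ne f hxa, slope_comm]
    exact hf.slope_lt_deriv hx hy hxy hfa
  · rw [dslope_of_ne f hxa, dslope_of_ne f hya, slope_def_field, slope_def_field]
    exact hf.secant_strict_mono ha hx hy hxa hya hxy

theorem strictConvexOn_sinh : StrictConvexOn ℝ (Ici 0) sinh := by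
  refine StrictMonoOn.strictConvexOn_of_deriv (convex_Ici 0) continuous_sinh.continuousOn ?_
  rw [Real.deriv_sinh]
  exact cosh_strictMonoOn.mono interior_subset

theorem strictMonoOn_dslope_sinh : StrictMonoOn (dslope sinh 0) (Ici 0) :=
  strictMonoOn_dslope_of_strictConvexOn strictConvexOn_sinh self_mem_Ici differentiableAt_sinh

theorem dslope_sinh_zero_pos {t : ℝ} (ht : 0 ≤ t) : 0 < dslope sinh 0 t :=
  calc 0 < dslope sinh 0 0 := by simp
    _ ≤ dslope sinh 0 t := strictMonoOn_dslope_sinh.monotoneOn self_mem_Ici ht ht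

/-- The critical inverse temperature `β_c` at a real number of states. The value at `2` is the
one that makes it continuous there. -/
noncomputable def realBetaC (x : ℝ) : ℝ :=
  if x = 2 then 1 else (x - 1) * log (x - 1) / (x - 2)

theorem realBetaC_natCast (q : ℕ) : realBetaC q = betaC q := by
  have hcast : (q : ℝ) = 2 ↔ q = 2 := by norm_cast
  simp only [realBetaC, betaC, hcast]

theorem realBetaC_div_self_of_ne_two {x : ℝ} (hx : x ≠ 2) :
    realBetaC x / x = (x - 1) / (x * (x - 2)) * log (x - 1) := by
  rw [realBetaC, if_neg hx, div_div, mul_comm (x - 2), mul_div_right_comm]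

theorem realBetaC_div_self_eq_inv_dslope_sinh {x : ℝ} (hx : 1 < x) :
    realBetaC x / x = (2 * dslope sinh 0 (log (x - 1)))⁻¹ := by
  have hx₁ : 0 < x - 1 := sub_pos.2 hx
  rcases eq_or_ne x 2 with rfl | hx₂
  · have hlog : log ((2 : ℝ) - 1) = 0 := by norm_num
    simp [realBetaC, hlog]
  · have hlog : log (x - 1) ≠ 0 := log_ne_zero_of_pos_of_ne_one hx₁ fun h => hx₂ (by linarith)
    have hdslope :
        2 * dslope sinh 0 (log (x - 1)) = x * (x - 2) / (x - 1) / log (x - 1) := by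
      rw [dslope_of_ne sinh hlog, slope_def_field, sinh_zero, sub_zero, sub_zero, sinh_log hx₁]
      field_simp
      ring
    rw [realBetaC_div_self_of_ne_two hx₂, hdslope]
    field_simp

theorem strictAntiOn_realBetaC_div_self : StrictAntiOn (fun x => realBetaC x / x) (Ici 2) := by
  intro x (hx : 2 ≤ x) y (hy : 2 ≤ y) hxy
  have hlogx : 0 ≤ log (x - 1) := log_nonneg (by linarith)
  have hlogy : 0 ≤ log (y - 1) := log_nonneg (by linarith)
  have hlog : log (x - 1) < log (y - 1) := log_lt_log (by linarith) (by linarith)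
  have hslope : dslope sinh 0 (log (x - 1)) < dslope sinh 0 (log (y - 1)) :=
    strictMonoOn_dslope_sinh hlogx hlogy hlog
  have hpos : 0 < dslope sinh 0 (log (x - 1)) := dslope_sinh_zero_pos hlogx
  simp only [realBetaC_div_self_eq_inv_dslope_sinh (one_lt_two.trans_le hx),
    realBetaC_div_self_eq_inv_dslope_sinh (one_lt_two.trans_le hy)]
  gcongr

theorem realBetaC_mul_one_sub_inv_lt {x : ℝ} (hx : 3 ≤ x) :
    realBetaC x * (1 - 1 / x) < realBetaC (x - 1) := by
  have hx₀ : x ≠ 0 := by linarith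
  have hx₁ : 0 < x - 1 := by linarith
  have hlt : realBetaC x / x < realBetaC (x - 1) / (x - 1) :=
    strictAntiOn_realBetaC_div_self (mem_Ici.2 (by linarith)) (mem_Ici.2 (by linarith))
      (sub_one_lt x)
  calc realBetaC x * (1 - 1 / x) = realBetaC x / x * (x - 1) := by field_simp
    _ < realBetaC (x - 1) := (lt_div_iff₀ hx₁).1 hlt

theorem betaC_recursive_inequality_general :
    (∀ x : ℝ, 3 ≤ x → realBetaC x * (1 - 1 / x) < realBetaC (x - 1)) ∧
    StrictAntiOn (fun x : ℝ => (x - 1) / (x * (x - 2)) * log (x - 1)) (Ioi 2) :=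
  ⟨fun _ => realBetaC_mul_one_sub_inv_lt,
    (strictAntiOn_realBetaC_div_self.mono Ioi_subset_Ici_self).congr
      fun _ hx => realBetaC_div_self_of_ne_two (ne_of_gt hx)⟩

/-- (From the proof of Theorem C, Eq. (5.1)): for every integer `q ≥ 3`,
`β_c(q)(1 − 1/q) < β_c(q−1)`; for `q ≥ 4` this follows from the fact that
`f(x) = ((x−1)/(x(x−2))) log(x−1)` is strictly decreasing on `[3,∞)`. -/
theorem betaC_recursive_inequality :
    (∀ q : ℕ, 3 ≤ q → betaC q * (1 - 1 / (q : ℝ)) < betaC (q - 1)) ∧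
    StrictAntiOn (fun x : ℝ => (x - 1) / (x * (x - 2)) * Real.log (x - 1))
      (Set.Ici (3 : ℝ)) := by
  refine ⟨fun q hq => ?_,
    betaC_recursive_inequality_general.2.mono (Ici_subset_Ioi.2 (by norm_num))⟩
  simpa only [← realBetaC_natCast, Nat.cast_pred (zero_lt_three.trans_le hq)] using
    betaC_recursive_inequality_general.1 q (by exact_mod_cast hq)
end
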